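/- For every ε > 0 there exists γ₀ > 0 such that for every γ with 0 < γ < γ₀, any sequence (ψ_t, θ_t) in ℝ² satisfying ψ_{t+1} = ψ_t − γ(4ψ_t³ + εθ_t) and θ_{t+1} = θ_t − γ(4θ_t³ − εψ_t) with (ψ₀, θ₀) ∈ [−√ε, √ε]² remains in [−√ε, √ε]² for all t ≥ 0. -/

import Mathlib

/-!
On `[-r, r]` the damping map `x ↦ x - c * x ^ 3` is odd and, as long as `3 * c * r ^ 2 ≤ 1`,
monotone. One damping step therefore shrinks `[-r, r]` to `[-(r - c * r ^ 3), r - c * r ^ 3]`, and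
the slack `c * r ^ 3` absorbs a coupling term `d * y` with `|y| ≤ r` as soon as `|d| ≤ c * r ^ 2`.
The Dirac-GAN update has `c = 4 * γ` and `d = ± γ * ε`, so `r = √ε` leaves a factor `4` to spare
and the only constraint on `γ` is the monotonicity condition `12 * γ * ε ≤ 1`.
-/

open Set

section CubicDamping

variable {R : Type*} [CommRing R] [LinearOrder R] [IsStrictOrderedRing R] {c d r x y : R}

theorem monotoneOn_sub_mul_cube (hc : 0 ≤ c) (hcr : 3 * c * r ^ 2 ≤ 1) :
    MonotoneOn (fun x : R ↦ x - c * x ^ 3) (Icc (-r) r) := by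
  intro x hx y hy hxy
  have hx_sq : x ^ 2 ≤ r ^ 2 := sq_le_sq' hx.1 hx.2
  have hy_sq : y ^ 2 ≤ r ^ 2 := sq_le_sq' hy.1 hy.2
  have hquad : x ^ 2 + x * y + y ^ 2 ≤ 3 * r ^ 2 := by nlinarith [sq_nonneg (x - y)]
  have hslope : 0 ≤ 1 - c * (x ^ 2 + x * y + y ^ 2) := by
    linarith [mul_le_mul_of_nonneg_left hquad hc]
  have hdiff : (y - c * y ^ 3) - (x - c * x ^ 3)
      = (y - x) * (1 - c * (x ^ 2 + x * y + y ^ 2)) := by ring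
  exact sub_nonneg.mp (hdiff ▸ mul_nonneg (sub_nonneg.mpr hxy) hslope)

theorem abs_sub_mul_cube_le (hc : 0 ≤ c) (hcr : 3 * c * r ^ 2 ≤ 1) (hx : |x| ≤ r) :
    |x - c * x ^ 3| ≤ r - c * r ^ 3 := by
  have hr : -r ≤ r := neg_le_self ((abs_nonneg x).trans hx)
  have hmono := monotoneOn_sub_mul_cube hc hcr
  have hxr : x ∈ Icc (-r) r := abs_le.mp hx
  have hlower : -r - c * (-r) ^ 3 ≤ x - c * x ^ 3 := hmono (left_mem_Icc.mpr hr) hxr hxr.1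
  have hupper : x - c * x ^ 3 ≤ r - c * r ^ 3 := hmono hxr (right_mem_Icc.mpr hr) hxr.2
  exact abs_le.mpr ⟨by linarith, hupper⟩

theorem abs_sub_mul_cube_sub_mul_le (hc : 0 ≤ c) (hcr : 3 * c * r ^ 2 ≤ 1)
    (hd : |d| ≤ c * r ^ 2) (hx : |x| ≤ r) (hy : |y| ≤ r) :
    |x - c * x ^ 3 - d * y| ≤ r := by
  have hcoupling : |d * y| ≤ c * r ^ 2 * r := by
    rw [abs_mul]
    exact mul_le_mul hd hy (abs_nonneg y) ((abs_nonneg d).trans hd)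
  calc |x - c * x ^ 3 - d * y|
      ≤ |x - c * x ^ 3| + |d * y| := abs_sub _ _
    _ ≤ (r - c * r ^ 3) + c * r ^ 2 * r :=
        add_le_add (abs_sub_mul_cube_le hc hcr hx) hcoupling
    _ = r := by ring

end CubicDamping

section DiracGAN

variable {R : Type*} [CommRing R]

/-- The update map `G` of the regularized Dirac-GAN with learning rate `γ` and coupling strength
`ε`, acting on pairs `(ψ, θ)`. -/
def diracGANUpdate (γ ε : R) (p : R × R) : R × R :=
  (p.1 - γ * (4 * p.1 ^ 3 + ε * p.2), p.2 - γ * (4 * p.2 ^ 3 - ε * p.1))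

variable [LinearOrder R] [IsStrictOrderedRing R] {γ ε r : R}

theorem mapsTo_diracGANUpdate_square (hγ : 0 ≤ γ) (hγr : 12 * γ * r ^ 2 ≤ 1)
    (hεr : |ε| ≤ 4 * r ^ 2) :
    MapsTo (diracGANUpdate γ ε) (Icc (-r) r ×ˢ Icc (-r) r) (Icc (-r) r ×ˢ Icc (-r) r) := by
  have hdamping : 0 ≤ 4 * γ := by positivity
  have hmono : 3 * (4 * γ) * r ^ 2 ≤ 1 := by linarith
  have hcoupling : |γ * ε| ≤ 4 * γ * r ^ 2 := by
    rw [abs_mul, abs_of_nonneg hγ]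
    linarith [mul_le_mul_of_nonneg_left hεr hγ]
  have hcoupling_neg : |-(γ * ε)| ≤ 4 * γ * r ^ 2 := by rwa [abs_neg]
  rintro ⟨ψ, θ⟩ ⟨hψ, hθ⟩
  rw [mem_Icc, ← abs_le] at hψ hθ
  have hψ_next : |ψ - γ * (4 * ψ ^ 3 + ε * θ)| ≤ r := by
    convert abs_sub_mul_cube_sub_mul_le hdamping hmono hcoupling hψ hθ using 2
    ring
  have hθ_next : |θ - γ * (4 * θ ^ 3 - ε * ψ)| ≤ r := by
    convert abs_sub_mul_cube_sub_mul_le hdamping hmono hcoupling_neg hθ hψ using 2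
    ring
  exact ⟨abs_le.mp hψ_next, abs_le.mp hθ_next⟩

end DiracGAN

/-- For sufficiently small learning rates, learning trajectories of the regularized Dirac-GAN
dynamics started in the square `[−√ε, √ε]²` never leave it. -/
theorem diracGAN_square_traps :
    ∀ ε : ℝ, 0 < ε → ∃ γ₀ > (0 : ℝ), ∀ γ : ℝ, 0 < γ → γ < γ₀ →
      ∀ ψ θ : ℕ → ℝ,
        (∀ t, ψ (t + 1) = ψ t - γ * (4 * (ψ t) ^ 3 + ε * θ t)) →
        (∀ t, θ (t + 1) = θ t - γ * (4 * (θ t) ^ 3 - ε * ψ t)) →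
        ψ 0 ∈ Set.Icc (-Real.sqrt ε) (Real.sqrt ε) →
        θ 0 ∈ Set.Icc (-Real.sqrt ε) (Real.sqrt ε) →
        ∀ t, ψ t ∈ Set.Icc (-Real.sqrt ε) (Real.sqrt ε) ∧
          θ t ∈ Set.Icc (-Real.sqrt ε) (Real.sqrt ε) := by
  intro ε hε
  refine ⟨1 / (12 * ε), by positivity, fun γ hγ hγ₀ ψ θ hψ hθ hψ0 hθ0 t ↦ ?_⟩
  have hsq : √ε ^ 2 = ε := Real.sq_sqrt hε.le
  have hrate : 12 * γ * √ε ^ 2 ≤ 1 := by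
    rw [lt_div_iff₀ (by positivity)] at hγ₀
    rw [hsq]
    linarith
  have hcoupling : |ε| ≤ 4 * √ε ^ 2 := by
    rw [hsq, abs_of_pos hε]
    linarith
  induction t with
  | zero => exact ⟨hψ0, hθ0⟩
  | succ t ih =>
    rw [hψ, hθ]
    exact mapsTo_diracGANUpdate_square hγ.le hrate hcoupling (mk_mem_prod ih.1 ih.2)
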